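/- Let G be a finite group, let (σ_j)_{j∈J} be a complete family of irreducibles for G, let ρ be any unitary representation of G on a finite-dimensional complex inner product space V, and let b ∈ V. Then (1/|G|) Σ_{g∈G} |⟨b, ρ(g) b⟩|² ≤ Σ_{j∈J} ‖I_j b‖⁴ / d_j, where I_j = (d_j/|G|) Σ_{g∈G} conj(χ_j(g)) ρ(g) is the σ_j-isotypic projection. -/

import Mathlib

noncomputable section

open scoped BigOperators InnerProductSpace

def IsUnitaryRep {G V : Type*} [Group G] [NormedAddCommGroup V] [InnerProductSpace ℂ V]
    (ρ : Representation ℂ G V) : Prop :=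
  ∀ (g : G) (v w : V), ⟪ρ g v, ρ g w⟫_ℂ = ⟪v, w⟫_ℂ

def IsIrreducibleRep {G V : Type*} [Group G] [AddCommGroup V] [Module ℂ V]
    (ρ : Representation ℂ G V) : Prop :=
  (∃ v : V, v ≠ 0) ∧
    ∀ W : Submodule ℂ V, (∀ (g : G) (v : V), v ∈ W → ρ g v ∈ W) → W = ⊥ ∨ W = ⊤

def RepIso {G V₁ V₂ : Type*} [Group G] [AddCommGroup V₁] [Module ℂ V₁]
    [AddCommGroup V₂] [Module ℂ V₂]
    (ρ₁ : Representation ℂ G V₁) (ρ₂ : Representation ℂ G V₂) : Prop :=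
  ∃ e : V₁ ≃ₗ[ℂ] V₂, ∀ (g : G) (v : V₁), e (ρ₁ g v) = ρ₂ g (e v)

def repChar {G V : Type*} [Group G] [AddCommGroup V] [Module ℂ V]
    (ρ : Representation ℂ G V) (g : G) : ℂ := LinearMap.trace ℂ V (ρ g)

def IsCompleteFamily {G : Type*} [Group G] {J : Type*}
    (W : J → Type*) [∀ j, NormedAddCommGroup (W j)] [∀ j, InnerProductSpace ℂ (W j)]
    [∀ j, FiniteDimensional ℂ (W j)]
    (σ : ∀ j, Representation ℂ G (W j)) : Prop :=
  (∀ j, IsUnitaryRep (σ j)) ∧ (∀ j, IsIrreducibleRep (σ j)) ∧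
    (∀ j j', j ≠ j' → ¬ RepIso (σ j) (σ j')) ∧
    (∀ (U : Type) [AddCommGroup U] [Module ℂ U] [FiniteDimensional ℂ U]
      (τ : Representation ℂ G U), IsIrreducibleRep τ → ∃ j, RepIso τ (σ j))

def isoProj {G V : Type*} [Group G] [Fintype G] [AddCommGroup V] [Module ℂ V]
    (d : ℕ) (χ : G → ℂ) (ρ : Representation ℂ G V) : V →ₗ[ℂ] V :=
  ((d : ℂ) / (Fintype.card G : ℂ)) • ∑ g : G, starRingEnd ℂ (χ g) • (ρ g : V →ₗ[ℂ] V)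

def onI {G : Type*} [One G] {k : ℕ} (g : G) (I : Finset (Fin k)) : Fin k → G :=
  fun i => if i ∈ I then g else 1

def invProj {G V : Type*} [Group G] [AddCommGroup V] [Module ℂ V] {k : ℕ}
    (ρ : Representation ℂ (Fin k → G) V) (m : G) : V →ₗ[ℂ] V :=
  ((2 : ℂ) ^ k)⁻¹ • ∑ I : Finset (Fin k), (ρ (onI m I) : V →ₗ[ℂ] V)

def isoProjI {G V : Type*} [Group G] [Fintype G] [AddCommGroup V] [Module ℂ V] {k : ℕ}
    (ρ : Representation ℂ (Fin k → G) V) (d : ℕ) (χ : G → ℂ) (I : Finset (Fin k)) :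
    V →ₗ[ℂ] V :=
  ((d : ℂ) / (Fintype.card G : ℂ)) • ∑ g : G, starRingEnd ℂ (χ g) • (ρ (onI g I) : V →ₗ[ℂ] V)

/-
Put the coefficient `g ↦ ⟪b, ρ g b⟫` in the Hilbert space `ℂ^G`. The span of the orbit of `b` is an
orthogonal sum of irreducible subrepresentations; write `b = ∑ vᵢ` accordingly. Orthogonality kills
the cross terms, so the coefficient of `b` is the sum of those of the `vᵢ`. By Schur orthogonality
the coefficients belonging to different types `j` are orthogonal, while that of `vᵢ` has norm
`√(|G| / dⱼ) ‖vᵢ‖²`. Using Pythagoras across the types and the triangle inequality within each type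
gives the bound, because `‖I_j b‖²` is the sum of `‖vᵢ‖²` over the `i` of type `j`.
-/

section Orthogonality

variable {𝕜 E ι J : Type*} [RCLike 𝕜] [NormedAddCommGroup E] [InnerProductSpace 𝕜 E]

theorem norm_sq_sum_of_pairwise_inner_eq_zero (s : Finset ι) (f : ι → E)
    (hf : ∀ i ∈ s, ∀ k ∈ s, i ≠ k → inner 𝕜 (f i) (f k) = 0) :
    ‖∑ i ∈ s, f i‖ ^ 2 = ∑ i ∈ s, ‖f i‖ ^ 2 := by
  have h : inner 𝕜 (∑ i ∈ s, f i) (∑ i ∈ s, f i) = ∑ i ∈ s, inner 𝕜 (f i) (f i) := by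
    simp only [sum_inner, inner_sum]
    refine Finset.sum_congr rfl fun i hi => ?_
    exact Finset.sum_eq_single_of_mem i hi fun k hk hki => hf k hk i hi hki
  simp only [inner_self_eq_norm_sq_to_K] at h
  exact_mod_cast h

theorem norm_sq_sum_le_of_orthogonal_fibers [Fintype ι] [Fintype J] [DecidableEq J]
    (t : ι → J) (f : ι → E) (hf : ∀ i k, t i ≠ t k → inner 𝕜 (f i) (f k) = 0) :
    ‖∑ i, f i‖ ^ 2 ≤ ∑ j, (∑ i with t i = j, ‖f i‖) ^ 2 := by
  have fibers_orthogonal (j j' : J) (hj : j ≠ j') :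
      inner 𝕜 (∑ i with t i = j, f i) (∑ i with t i = j', f i) = 0 := by
    simp only [sum_inner, inner_sum]
    refine Finset.sum_eq_zero fun i hi => Finset.sum_eq_zero fun k hk => hf _ _ ?_
    rw [(Finset.mem_filter.1 hi).2, (Finset.mem_filter.1 hk).2]
    exact hj
  rw [← Finset.sum_fiberwise Finset.univ t f,
    norm_sq_sum_of_pairwise_inner_eq_zero (𝕜 := 𝕜) _ _ fun j _ j' _ => fibers_orthogonal j j']
  gcongr with j
  exact norm_sum_le _ _

end Orthogonality

section Irreducible

variable {k G V : Type*} [Field k] [Monoid G] [AddCommGroup V] [Module k V]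

theorem nontrivial_subrepresentation [Nontrivial V] (ρ : Representation k G V) :
    Nontrivial (Subrepresentation ρ) :=
  ⟨⊥, ⊤, fun h => bot_ne_top (α := Submodule k V) (congrArg Subrepresentation.toSubmodule h)⟩

theorem nontrivial_of_isIrreducible (ρ : Representation k G V) [ρ.IsIrreducible] :
    Nontrivial V := by
  have : Nontrivial (Submodule k V) :=
    (Subrepresentation.toSubmodule_injective (ρ := ρ)).nontrivial
  exact (Submodule.nontrivial_iff k).1 this

theorem finrank_pos_of_isIrreducible [FiniteDimensional k V] (ρ : Representation k G V)
    [ρ.IsIrreducible] : 0 < Module.finrank k V :=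
  have := nontrivial_of_isIrreducible ρ
  Module.finrank_pos

theorem isIrreducible_of_equiv {V' : Type*} [AddCommGroup V'] [Module k V']
    {ρ : Representation k G V} {ρ' : Representation k G V'} (φ : ρ.Equiv ρ')
    (h : ρ'.IsIrreducible) : ρ.IsIrreducible := by
  rw [Representation.irreducible_iff_isSimpleModule_asModule] at h ⊢
  exact .congr <| LinearEquiv.ofBijective
    (Representation.IntertwiningMap.equivLinearMapAsModule ρ ρ' φ.toIntertwiningMap) φ.bijective

theorem isIrreducible_toRepresentation_of_isAtom {ρ : Representation k G V}
    {S : Subrepresentation ρ} (hS : IsAtom S) : S.toRepresentation.IsIrreducible := by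
  have : Nontrivial S.toSubmodule := Submodule.nontrivial_iff_ne_bot.2 fun h =>
    hS.ne_bot (Subrepresentation.toSubmodule_injective h)
  have := nontrivial_subrepresentation S.toRepresentation
  have map_injective := Submodule.map_injective_of_injective S.toSubmodule.injective_subtype
  refine ⟨fun T => ?_⟩
  let T' : Subrepresentation ρ := ⟨T.toSubmodule.map S.toSubmodule.subtype, by
    rintro g _ ⟨v, hv, rfl⟩
    exact ⟨_, T.apply_mem_toSubmodule g hv, rfl⟩⟩
  have hT' : T' ≤ S := Submodule.map_subtype_le _ _
  refine (hS.le_iff.1 hT').imp (fun h => ?_) fun h => ?_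
  · refine Subrepresentation.toSubmodule_injective (map_injective ?_)
    exact (congrArg Subrepresentation.toSubmodule h).trans (Submodule.map_bot _).symm
  · refine Subrepresentation.toSubmodule_injective (map_injective ?_)
    exact (congrArg Subrepresentation.toSubmodule h).trans (Submodule.map_subtype_top _).symm

end Irreducible

section Bridge

variable {G V : Type*} [Group G] [AddCommGroup V] [Module ℂ V] {ρ : Representation ℂ G V}

theorem isIrreducibleRep_iff_isIrreducible : IsIrreducibleRep ρ ↔ ρ.IsIrreducible := by
  constructor
  · rintro ⟨⟨v, hv⟩, h⟩
    have : Nontrivial V := nontrivial_of_ne v 0 hv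
    have := nontrivial_subrepresentation ρ
    exact ⟨fun S => (h S.toSubmodule S.apply_mem_toSubmodule).imp
      (fun hS => Subrepresentation.toSubmodule_injective hS)
      (fun hS => Subrepresentation.toSubmodule_injective hS)⟩
  · intro h
    have := nontrivial_of_isIrreducible ρ
    exact ⟨exists_ne 0, fun U hU => (eq_bot_or_eq_top (⟨U, hU⟩ : Subrepresentation ρ)).imp
      (congrArg Subrepresentation.toSubmodule) (congrArg Subrepresentation.toSubmodule)⟩

theorem repIso_iff_nonempty_equiv {V' : Type*} [AddCommGroup V'] [Module ℂ V']
    {ρ' : Representation ℂ G V'} : RepIso ρ ρ' ↔ Nonempty (ρ.Equiv ρ') :=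
  ⟨fun ⟨e, he⟩ => ⟨.mk e fun g => LinearMap.ext (he g)⟩,
    fun ⟨φ⟩ => ⟨φ.toLinearEquiv, φ.toIntertwiningMap.isIntertwining _ _⟩⟩

end Bridge

namespace IsCompleteFamily

variable {G J : Type*} [Group G] {W : J → Type*} [∀ j, NormedAddCommGroup (W j)]
  [∀ j, InnerProductSpace ℂ (W j)] [∀ j, FiniteDimensional ℂ (W j)]
  {σ : ∀ j, Representation ℂ G (W j)}

theorem isIrreducible (hfam : IsCompleteFamily W σ) (j : J) : (σ j).IsIrreducible :=
  isIrreducibleRep_iff_isIrreducible.1 (hfam.2.1 j)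

theorem isEmpty_equiv_of_equiv (hfam : IsCompleteFamily W σ) {V₁ V₂ : Type*} [AddCommGroup V₁]
    [Module ℂ V₁] [AddCommGroup V₂] [Module ℂ V₂] {τ₁ : Representation ℂ G V₁}
    {τ₂ : Representation ℂ G V₂} {i j : J} (φ₁ : τ₁.Equiv (σ i)) (φ₂ : τ₂.Equiv (σ j))
    (hij : i ≠ j) : IsEmpty (τ₁.Equiv τ₂) :=
  ⟨fun ψ => hfam.2.2.1 i j hij <|
    repIso_iff_nonempty_equiv.2 ⟨(φ₁.symm.trans ψ).trans φ₂⟩⟩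

-- `IsCompleteFamily` speaks of representations on types in `Type`, so `τ` is moved to `ℂⁿ` first.
theorem exists_equiv (hfam : IsCompleteFamily W σ) {U : Type*} [AddCommGroup U] [Module ℂ U]
    [FiniteDimensional ℂ U] (τ : Representation ℂ G U) (hτ : τ.IsIrreducible) :
    ∃ j, Nonempty (τ.Equiv (σ j)) := by
  let e : U ≃ₗ[ℂ] (Fin (Module.finrank ℂ U) → ℂ) := (Module.finBasis ℂ U).equivFun
  let τ' : Representation ℂ G (Fin (Module.finrank ℂ U) → ℂ) :=
    (e.conjRingEquiv : Module.End ℂ U →* _).comp τ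
  let φ : τ.Equiv τ' := .mk e fun g => LinearMap.ext fun v => by simp [τ']
  obtain ⟨j, hj⟩ := hfam.2.2.2 _ τ'
    (isIrreducibleRep_iff_isIrreducible.2 (isIrreducible_of_equiv φ.symm hτ))
  exact ⟨j, (repIso_iff_nonempty_equiv.1 hj).map φ.trans⟩

end IsCompleteFamily

theorem exists_finiteDimensional_subrepresentation_mem {k G V : Type*} [Field k] [Monoid G]
    [Finite G] [AddCommGroup V] [Module k V] (ρ : Representation k G V) (b : V) :
    ∃ S : Subrepresentation ρ, FiniteDimensional k S.toSubmodule ∧ b ∈ S.toSubmodule := by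
  refine ⟨⟨Submodule.span k (Set.range fun g => ρ g b), fun g v hv => ?_⟩,
    FiniteDimensional.span_of_finite k (Set.finite_range _),
    Submodule.subset_span ⟨1, by simp⟩⟩
  induction hv using Submodule.span_induction with
  | mem x hx =>
    obtain ⟨h, rfl⟩ := hx
    exact Submodule.subset_span ⟨g * h, by simp⟩
  | zero => simp
  | add x y _ _ hx hy => simpa using Submodule.add_mem _ hx hy
  | smul c x _ hx => simpa using Submodule.smul_mem _ c hx

namespace IsUnitaryRep

variable {G V : Type*} [Group G] [NormedAddCommGroup V] [InnerProductSpace ℂ V]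
  {ρ : Representation ℂ G V}

theorem inner_apply_left (hρ : IsUnitaryRep ρ) (g : G) (v w : V) :
    ⟪ρ g v, w⟫_ℂ = ⟪v, ρ g⁻¹ w⟫_ℂ := by
  rw [← hρ g v, Representation.self_inv_apply]

theorem toRepresentation (hρ : IsUnitaryRep ρ) (S : Subrepresentation ρ) :
    IsUnitaryRep S.toRepresentation :=
  fun g v w => hρ g v w

/-- The orthogonal complement of a subrepresentation of a unitary representation, as a
subrepresentation. -/
def orthogonal (hρ : IsUnitaryRep ρ) (S : Subrepresentation ρ) : Subrepresentation ρ where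
  toSubmodule := S.toSubmoduleᗮ
  apply_mem_toSubmodule g v hv u hu := by
    rw [← inv_inv g, ← hρ.inner_apply_left]
    exact hv _ (S.apply_mem_toSubmodule g⁻¹ hu)

theorem exists_orthogonal_sup_eq (hρ : IsUnitaryRep ρ) {S T : Subrepresentation ρ}
    [FiniteDimensional ℂ T.toSubmodule] (hTS : T < S) (hT : T ≠ ⊥) :
    ∃ T' < S, T.toSubmodule ⟂ T'.toSubmodule ∧ T.toSubmodule ⊔ T'.toSubmodule = S.toSubmodule := by
  refine ⟨hρ.orthogonal T ⊓ S, inf_le_right.lt_of_ne fun h => hT ?_,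
    (Submodule.isOrtho_orthogonal_right _).mono_right inf_le_left,
    Submodule.sup_orthogonal_inf_of_hasOrthogonalProjection hTS.le⟩
  exact Subrepresentation.toSubmodule_injective
    (Submodule.isOrtho_self.1 (hTS.le.trans (inf_eq_right.1 h)))

theorem exists_orthogonal_irreducibles (hρ : IsUnitaryRep ρ) (S : Subrepresentation ρ)
    [FiniteDimensional ℂ S.toSubmodule] :
    ∃ (ι : Type) (_ : Fintype ι) (U : ι → Subrepresentation ρ),
      (∀ i, (U i).toRepresentation.IsIrreducible) ∧
      Pairwise (fun i j => (U i).toSubmodule ⟂ (U j).toSubmodule) ∧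
      ⨆ i, (U i).toSubmodule = S.toSubmodule := by
  induction hn : Module.finrank ℂ S.toSubmodule using Nat.strong_induction_on generalizing S with
  | _ n ih =>
  subst hn
  by_cases hbot : S = ⊥
  · subst hbot
    exact ⟨Empty, inferInstance, Empty.elim, fun i => i.elim, fun i => i.elim, iSup_of_empty _⟩
  by_cases hatom : IsAtom S
  · exact ⟨Unit, inferInstance, fun _ => S, fun _ => isIrreducible_toRepresentation_of_isAtom hatom,
      fun i j hij => (hij rfl).elim, iSup_const⟩
  obtain ⟨T, hTS, hT⟩ : ∃ T < S, T ≠ ⊥ := by simpa [IsAtom, hbot] using hatom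
  have : FiniteDimensional ℂ T.toSubmodule := Submodule.finiteDimensional_of_le hTS.le
  obtain ⟨T', hT'S, hTT', hsup⟩ := hρ.exists_orthogonal_sup_eq hTS hT
  have : FiniteDimensional ℂ T'.toSubmodule := Submodule.finiteDimensional_of_le hT'S.le
  obtain ⟨ι, _, U, hU, hUo, hUsup⟩ := ih _ (Submodule.finrank_lt_finrank_of_lt hTS) T rfl
  obtain ⟨ι', _, U', hU', hUo', hUsup'⟩ := ih _ (Submodule.finrank_lt_finrank_of_lt hT'S) T' rfl
  have cross (i : ι) (j : ι') : (U i).toSubmodule ⟂ (U' j).toSubmodule :=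
    hTT'.mono (hUsup ▸ le_iSup (fun i => (U i).toSubmodule) i)
      (hUsup' ▸ le_iSup (fun j => (U' j).toSubmodule) j)
  refine ⟨ι ⊕ ι', inferInstance, Sum.elim U U', Sum.rec hU hU', ?_, ?_⟩
  · rintro (i | i) (j | j) hij
    · exact hUo (by simpa using hij)
    · exact cross i j
    · exact (cross j i).symm
    · exact hUo' (by simpa using hij)
  · simp only [iSup_sum, Sum.elim_inl, Sum.elim_inr, hUsup, hUsup', hsup]

end IsUnitaryRep

section Schur

variable {k G U U' : Type*} [Field k] [Group G]
  [AddCommGroup U] [Module k U] [AddCommGroup U'] [Module k U']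

theorem finrank_smul_intertwiningMap_apply [IsAlgClosed k] [FiniteDimensional k U]
    {τ : Representation k G U} [τ.IsIrreducible] (f : τ.IntertwiningMap τ) (v : U) :
    (Module.finrank k U : k) • f v = LinearMap.trace k U f.toLinearMap • v := by
  obtain ⟨c, rfl⟩ :=
    (Representation.IsIrreducible.algebraMap_intertwiningMap_bijective_of_isAlgClosed).2 f
  have trace_one : LinearMap.trace k U (1 : τ.IntertwiningMap τ).toLinearMap = Module.finrank k U :=
    LinearMap.trace_one k U
  simp [trace_one, smul_smul, mul_comm c]

variable [Fintype G]

/-- The sum over the group of the conjugates `τ' g ∘ A ∘ τ g⁻¹` of a linear map `A`, as an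
intertwining map. It is not divided by the order of the group. -/
def sumConj (τ : Representation k G U) (τ' : Representation k G U') (A : U →ₗ[k] U') :
    τ.IntertwiningMap τ' :=
  Representation.invariantsEquivIntertwiningMap τ τ'
    ⟨(τ.linHom τ').norm A, fun g => (τ.linHom τ').self_norm_apply g A⟩

theorem sumConj_apply (τ : Representation k G U) (τ' : Representation k G U') (A : U →ₗ[k] U')
    (v : U) : sumConj τ τ' A v = ∑ g, τ' g (A (τ g⁻¹ v)) := by
  change (τ.linHom τ').norm A v = _
  simp [Representation.norm]

theorem trace_sumConj (τ : Representation k G U) (A : U →ₗ[k] U) :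
    LinearMap.trace k U (sumConj τ τ A).toLinearMap =
      Fintype.card G * LinearMap.trace k U A := by
  have trace_conj (g : G) : LinearMap.trace k U (τ.linHom τ g A) = LinearMap.trace k U A := by
    rw [Representation.linHom_apply, ← Module.End.mul_eq_comp, LinearMap.trace_mul_comm,
      ← Module.End.mul_eq_comp, mul_assoc, ← map_mul, inv_mul_cancel, map_one, mul_one]
  change LinearMap.trace k U ((τ.linHom τ).norm A) = _
  simp only [Representation.norm, LinearMap.sum_apply, map_sum, trace_conj, Finset.sum_const,
    Finset.card_univ, nsmul_eq_mul]

end Schur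

section MatrixCoeff

variable {G V : Type*} [Group G] [NormedAddCommGroup V] [InnerProductSpace ℂ V]

/-- The matrix coefficient `g ↦ ⟪v, ρ g w⟫` of a representation, as a vector of the Hilbert space
`ℂ^G` (with unnormalised inner product). -/
def matrixCoeff (ρ : Representation ℂ G V) (v w : V) : EuclideanSpace ℂ G :=
  WithLp.toLp 2 fun g => ⟪v, ρ g w⟫_ℂ

theorem norm_sq_matrixCoeff [Fintype G] (ρ : Representation ℂ G V) (v w : V) :
    ‖matrixCoeff ρ v w‖ ^ 2 = ∑ g, ‖⟪v, ρ g w⟫_ℂ‖ ^ 2 :=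
  EuclideanSpace.norm_sq_eq _

theorem matrixCoeff_sum_self {ι : Type*} [Fintype ι] {ρ : Representation ℂ G V}
    {U : ι → Subrepresentation ρ}
    (hU : Pairwise fun i j => (U i).toSubmodule ⟂ (U j).toSubmodule)
    (v : ∀ i, (U i).toSubmodule) :
    matrixCoeff ρ (∑ i, (v i : V)) (∑ i, (v i : V)) = ∑ i, matrixCoeff ρ (v i : V) (v i) := by
  ext g
  simp only [matrixCoeff, map_sum, sum_inner, inner_sum, WithLp.ofLp_sum, Finset.sum_apply]
  refine Finset.sum_congr rfl fun i _ => Finset.sum_eq_single_of_mem i (Finset.mem_univ i) ?_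
  exact fun k _ hki => Submodule.isOrtho_iff_inner_eq.1 (hU hki) _ (v k).2 _
    ((U i).apply_mem_toSubmodule g (v i).2)

theorem toLp_repChar [FiniteDimensional ℂ V] (ρ : Representation ℂ G V) :
    (WithLp.toLp 2 (repChar ρ) : EuclideanSpace ℂ G) =
      ∑ k, matrixCoeff ρ (stdOrthonormalBasis ℂ V k) (stdOrthonormalBasis ℂ V k) := by
  ext g
  simp [repChar, matrixCoeff, LinearMap.trace_eq_sum_inner _ (stdOrthonormalBasis ℂ V)]

end MatrixCoeff

section SchurOrthogonality

variable {G U U' : Type*} [Group G] [Fintype G] [NormedAddCommGroup U] [InnerProductSpace ℂ U]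
  [NormedAddCommGroup U'] [InnerProductSpace ℂ U']
  {τ : Representation ℂ G U} {τ' : Representation ℂ G U'}

theorem inner_matrixCoeff_eq_inner_sumConj (hτ : IsUnitaryRep τ) (v w : U) (v' w' : U') :
    ⟪matrixCoeff τ v w, matrixCoeff τ' v' w'⟫_ℂ =
      ⟪v', sumConj τ τ' (InnerProductSpace.rankOne ℂ w' w).toLinearMap v⟫_ℂ := by
  simp only [matrixCoeff, PiLp.inner_apply, sumConj_apply, inner_sum]
  refine Finset.sum_congr rfl fun g _ => ?_
  simp [inner_smul_right, ← hτ.inner_apply_left, mul_comm]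

theorem inner_matrixCoeff_eq_zero (hτ : IsUnitaryRep τ) [τ.IsIrreducible] [τ'.IsIrreducible]
    [IsEmpty (τ.Equiv τ')] (v w : U) (v' w' : U') :
    ⟪matrixCoeff τ v w, matrixCoeff τ' v' w'⟫_ℂ = 0 := by
  rw [inner_matrixCoeff_eq_inner_sumConj hτ, Subsingleton.elim (sumConj τ τ' _) 0,
    Representation.IntertwiningMap.coe_zero, Pi.zero_apply, inner_zero_right]

theorem inner_matrixCoeff [FiniteDimensional ℂ U] (hτ : IsUnitaryRep τ) [τ.IsIrreducible]
    (v w v' w' : U) :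
    ⟪matrixCoeff τ v w, matrixCoeff τ v' w'⟫_ℂ =
      Fintype.card G / Module.finrank ℂ U * (⟪v', v⟫_ℂ * ⟪w, w'⟫_ℂ) := by
  have hd : (Module.finrank ℂ U : ℂ) ≠ 0 := mod_cast (finrank_pos_of_isIrreducible τ).ne'
  have schur := finrank_smul_intertwiningMap_apply
    (sumConj τ τ (InnerProductSpace.rankOne ℂ w' w).toLinearMap) v
  rw [trace_sumConj, InnerProductSpace.trace_rankOne] at schur
  rw [inner_matrixCoeff_eq_inner_sumConj hτ, ← mul_right_inj' hd, ← inner_smul_right, schur,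
    inner_smul_right]
  field_simp

theorem norm_matrixCoeff_self [FiniteDimensional ℂ U] (hτ : IsUnitaryRep τ) [τ.IsIrreducible]
    (u : U) :
    ‖matrixCoeff τ u u‖ = √(Fintype.card G / Module.finrank ℂ U) * ‖u‖ ^ 2 := by
  have norm_sq : ‖matrixCoeff τ u u‖ ^ 2 =
      Fintype.card G / Module.finrank ℂ U * (‖u‖ ^ 2) ^ 2 := by
    have h := inner_matrixCoeff hτ u u u u
    simp only [inner_self_eq_norm_sq_to_K, ← sq] at h
    exact Complex.ofReal_injective (by simpa using h)
  rw [← Real.sqrt_sq (norm_nonneg (matrixCoeff τ u u)), norm_sq, Real.sqrt_mul (by positivity),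
    Real.sqrt_sq (by positivity)]

end SchurOrthogonality

section IsotypicProjection

variable {G V : Type*} [Group G] [Fintype G] [NormedAddCommGroup V] [InnerProductSpace ℂ V]

theorem inner_isoProj (d : ℕ) (χ : G → ℂ) (ρ : Representation ℂ G V) (x u : V) :
    ⟪x, isoProj d χ ρ u⟫_ℂ =
      d / Fintype.card G * ⟪(WithLp.toLp 2 χ : EuclideanSpace ℂ G), matrixCoeff ρ x u⟫_ℂ := by
  simp [isoProj, matrixCoeff, PiLp.inner_apply, mul_comm]

theorem isoProj_self [FiniteDimensional ℂ V] {ρ : Representation ℂ G V} (hρ : IsUnitaryRep ρ)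
    [ρ.IsIrreducible] (v : V) : isoProj (Module.finrank ℂ V) (repChar ρ) ρ v = v := by
  have hd : (Module.finrank ℂ V : ℂ) ≠ 0 := mod_cast (finrank_pos_of_isIrreducible ρ).ne'
  have hG : (Fintype.card G : ℂ) ≠ 0 := mod_cast Fintype.card_ne_zero
  refine ext_inner_left ℂ fun x => ?_
  simp only [inner_isoProj, toLp_repChar, sum_inner, inner_matrixCoeff hρ, ← Finset.mul_sum,
    OrthonormalBasis.sum_inner_mul_inner]
  field_simp

theorem isoProj_of_equiv {W : Type*} [AddCommGroup W] [Module ℂ W] [FiniteDimensional ℂ V]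
    {ρ : Representation ℂ G V} {σ : Representation ℂ G W} (hρ : IsUnitaryRep ρ) [ρ.IsIrreducible]
    (φ : ρ.Equiv σ) (v : V) : isoProj (Module.finrank ℂ W) (repChar σ) ρ v = v := by
  have hχ : repChar σ = repChar ρ := (Representation.char_iso φ).symm
  rw [hχ, ← φ.toLinearEquiv.finrank_eq, isoProj_self hρ]

theorem isoProj_of_isEmpty_equiv {W : Type*} [NormedAddCommGroup W] [InnerProductSpace ℂ W]
    [FiniteDimensional ℂ W] {ρ : Representation ℂ G V} {σ : Representation ℂ G W}
    (hσ : IsUnitaryRep σ) [σ.IsIrreducible] [ρ.IsIrreducible] [IsEmpty (σ.Equiv ρ)]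
    (d : ℕ) (v : V) : isoProj d (repChar σ) ρ v = 0 := by
  refine ext_inner_left ℂ fun x => ?_
  simp [inner_isoProj, toLp_repChar, inner_matrixCoeff_eq_zero hσ]

theorem isoProj_coe {V : Type*} [AddCommGroup V] [Module ℂ V] (d : ℕ) (χ : G → ℂ)
    {ρ : Representation ℂ G V} (S : Subrepresentation ρ) (u : S.toSubmodule) :
    isoProj d χ ρ u = isoProj d χ S.toRepresentation u := by
  simp [isoProj, Subrepresentation.toRepresentation]

end IsotypicProjection

namespace IsCompleteFamily

variable {G J V : Type*} [Group G] [NormedAddCommGroup V] [InnerProductSpace ℂ V]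
  {W : J → Type*} [∀ j, NormedAddCommGroup (W j)]
  [∀ j, InnerProductSpace ℂ (W j)] [∀ j, FiniteDimensional ℂ (W j)]
  {σ : ∀ j, Representation ℂ G (W j)} {ρ : Representation ℂ G V}

theorem exists_orthogonal_decomposition [Finite G] (hfam : IsCompleteFamily W σ)
    (hρ : IsUnitaryRep ρ) (b : V) :
    ∃ (ι : Type) (_ : Fintype ι) (U : ι → Subrepresentation ρ) (v : ∀ i, (U i).toSubmodule)
      (t : ι → J), Pairwise (fun i j => (U i).toSubmodule ⟂ (U j).toSubmodule) ∧
      (∀ i, Nonempty ((U i).toRepresentation.Equiv (σ (t i)))) ∧ ∑ i, (v i : V) = b := by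
  obtain ⟨S, _, hbS⟩ := exists_finiteDimensional_subrepresentation_mem ρ b
  obtain ⟨ι, _, U, hirr, hU, hsup⟩ := hρ.exists_orthogonal_irreducibles S
  obtain ⟨v, hv, hvb⟩ := (Submodule.mem_iSup_iff_exists_finsupp _ _).1 (hsup.ge hbS)
  have (i : ι) : FiniteDimensional ℂ (U i).toSubmodule :=
    Submodule.finiteDimensional_of_le (hsup ▸ le_iSup (fun i => (U i).toSubmodule) i)
  choose t ht using fun i => hfam.exists_equiv _ (hirr i)
  refine ⟨ι, inferInstance, U, fun i => ⟨v i, hv i⟩, t, hU, ht, ?_⟩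
  rw [← hvb, Finsupp.sum_fintype _ _ fun _ => rfl]

variable [Fintype G]

theorem isoProj_apply [DecidableEq J] (hfam : IsCompleteFamily W σ) (hρ : IsUnitaryRep ρ)
    {S : Subrepresentation ρ} {i : J} (φ : S.toRepresentation.Equiv (σ i)) (j : J)
    (u : S.toSubmodule) :
    isoProj (Module.finrank ℂ (W j)) (repChar (σ j)) ρ u = if i = j then (u : V) else 0 := by
  have : FiniteDimensional ℂ S.toSubmodule := φ.symm.toLinearEquiv.finiteDimensional
  have := hfam.isIrreducible j
  have := isIrreducible_of_equiv φ (hfam.isIrreducible i)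
  rw [isoProj_coe]
  split_ifs with hij
  · subst hij
    rw [isoProj_of_equiv (hρ.toRepresentation S) φ]
  · have := hfam.isEmpty_equiv_of_equiv (.refl (σ j)) φ (Ne.symm hij)
    rw [isoProj_of_isEmpty_equiv (hfam.1 j), Submodule.coe_zero]

theorem norm_matrixCoeff_coe (hfam : IsCompleteFamily W σ) (hρ : IsUnitaryRep ρ)
    {S : Subrepresentation ρ} {j : J} (φ : S.toRepresentation.Equiv (σ j)) (u : S.toSubmodule) :
    ‖matrixCoeff ρ (u : V) u‖ = √(Fintype.card G / Module.finrank ℂ (W j)) * ‖u‖ ^ 2 := by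
  have : FiniteDimensional ℂ S.toSubmodule := φ.symm.toLinearEquiv.finiteDimensional
  have := isIrreducible_of_equiv φ (hfam.isIrreducible j)
  rw [← φ.toLinearEquiv.finrank_eq, ← norm_matrixCoeff_self (hρ.toRepresentation S)]
  rfl

variable {ι : Type*} [Fintype ι] [DecidableEq J] {U : ι → Subrepresentation ρ} {t : ι → J}

theorem norm_sq_isoProj_sum (hfam : IsCompleteFamily W σ) (hρ : IsUnitaryRep ρ)
    (hU : Pairwise fun i j => (U i).toSubmodule ⟂ (U j).toSubmodule)
    (φ : ∀ i, (U i).toRepresentation.Equiv (σ (t i))) (v : ∀ i, (U i).toSubmodule) (j : J) :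
    ‖isoProj (Module.finrank ℂ (W j)) (repChar (σ j)) ρ (∑ i, (v i : V))‖ ^ 2 =
      ∑ i with t i = j, ‖v i‖ ^ 2 := by
  simp only [map_sum, fun i => hfam.isoProj_apply hρ (φ i) j (v i), ← Finset.sum_filter]
  exact norm_sq_sum_of_pairwise_inner_eq_zero (𝕜 := ℂ) _ _ fun i _ k _ hik =>
    Submodule.isOrtho_iff_inner_eq.1 (hU hik) _ (v i).2 _ (v k).2

theorem norm_sq_matrixCoeff_sum_le [Fintype J] (hfam : IsCompleteFamily W σ) (hρ : IsUnitaryRep ρ)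
    (hU : Pairwise fun i j => (U i).toSubmodule ⟂ (U j).toSubmodule)
    (φ : ∀ i, (U i).toRepresentation.Equiv (σ (t i))) (v : ∀ i, (U i).toSubmodule) :
    ‖matrixCoeff ρ (∑ i, (v i : V)) (∑ i, (v i : V))‖ ^ 2 ≤
      ∑ j, Fintype.card G / Module.finrank ℂ (W j) * (∑ i with t i = j, ‖v i‖ ^ 2) ^ 2 := by
  have orthogonal (i k : ι) (hik : t i ≠ t k) :
      ⟪matrixCoeff ρ (v i : V) (v i), matrixCoeff ρ (v k : V) (v k)⟫_ℂ = 0 := by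
    have := isIrreducible_of_equiv (φ i) (hfam.isIrreducible (t i))
    have := isIrreducible_of_equiv (φ k) (hfam.isIrreducible (t k))
    have := hfam.isEmpty_equiv_of_equiv (φ i) (φ k) hik
    exact inner_matrixCoeff_eq_zero (τ' := (U k).toRepresentation) (hρ.toRepresentation (U i))
      _ _ _ _
  rw [matrixCoeff_sum_self hU v]
  refine (norm_sq_sum_le_of_orthogonal_fibers t _ orthogonal).trans_eq
    (Finset.sum_congr rfl fun j _ => ?_)
  have norm_eq (i) (hi : i ∈ Finset.univ.filter (t · = j)) :
      ‖matrixCoeff ρ (v i : V) (v i)‖ =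
        √(Fintype.card G / Module.finrank ℂ (W j)) * ‖v i‖ ^ 2 := by
    rw [hfam.norm_matrixCoeff_coe hρ (φ i), (Finset.mem_filter.1 hi).2]
  rw [Finset.sum_congr rfl norm_eq, ← Finset.mul_sum, mul_pow, Real.sq_sqrt (by positivity)]

end IsCompleteFamily

theorem stmt9_general {G : Type*} [Group G] [Fintype G]
    {J : Type*} [Fintype J]
    (W : J → Type*) [∀ j, NormedAddCommGroup (W j)] [∀ j, InnerProductSpace ℂ (W j)]
    [∀ j, FiniteDimensional ℂ (W j)]
    (σ : ∀ j, Representation ℂ G (W j)) (hfam : IsCompleteFamily W σ)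
    {V : Type*} [NormedAddCommGroup V] [InnerProductSpace ℂ V]
    (ρ : Representation ℂ G V) (hρu : IsUnitaryRep ρ)
    (b : V) :
    (1 / (Fintype.card G : ℝ)) * ∑ g : G, ‖⟪b, ρ g b⟫_ℂ‖ ^ 2
      ≤ ∑ j, ‖isoProj (Module.finrank ℂ (W j)) (repChar (σ j)) ρ b‖ ^ 4
          / (Module.finrank ℂ (W j) : ℝ) := by
  classical
  obtain ⟨ι, _, U, v, t, hU, hφ, rfl⟩ := hfam.exists_orthogonal_decomposition hρu b
  have φ (i : ι) := (hφ i).some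
  calc
    _ = 1 / (Fintype.card G : ℝ) * ‖matrixCoeff ρ (∑ i, (v i : V)) (∑ i, (v i : V))‖ ^ 2 := by
      rw [norm_sq_matrixCoeff]
    _ ≤ 1 / (Fintype.card G : ℝ) * ∑ j, Fintype.card G / Module.finrank ℂ (W j) *
          (∑ i with t i = j, ‖v i‖ ^ 2) ^ 2 := by
      gcongr
      exact hfam.norm_sq_matrixCoeff_sum_le hρu hU φ v
    _ = _ := by
      rw [Finset.mul_sum]
      refine Finset.sum_congr rfl fun j _ => ?_
      rw [← hfam.norm_sq_isoProj_sum hρu hU φ v j]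
      field_simp

/-- For any unitary representation `ρ` of a finite group `G` and any `b ∈ V`,
`(1/|G|) Σ_g |⟪b, ρ g b⟫|² ≤ Σ_j ‖I_j b‖⁴ / d_j`. -/
theorem stmt9 {G : Type*} [Group G] [Fintype G]
    {J : Type*} [Fintype J]
    (W : J → Type*) [∀ j, NormedAddCommGroup (W j)] [∀ j, InnerProductSpace ℂ (W j)]
    [∀ j, FiniteDimensional ℂ (W j)]
    (σ : ∀ j, Representation ℂ G (W j)) (hfam : IsCompleteFamily W σ)
    {V : Type*} [NormedAddCommGroup V] [InnerProductSpace ℂ V] [FiniteDimensional ℂ V]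
    (ρ : Representation ℂ G V) (hρu : IsUnitaryRep ρ)
    (b : V) :
    (1 / (Fintype.card G : ℝ)) * ∑ g : G, ‖⟪b, ρ g b⟫_ℂ‖ ^ 2
      ≤ ∑ j, ‖isoProj (Module.finrank ℂ (W j)) (repChar (σ j)) ρ b‖ ^ 4
          / (Module.finrank ℂ (W j) : ℝ) :=
  stmt9_general W σ hfam ρ hρu b
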